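/- arXiv:2604.06329 — 2 statements merged into one kernel-verified Lean document; each statement's English description precedes it below -/
import Mathlib

section
/- In the restricted game RL^1(X,Y;v), the min-max value of player X is bounded above by the minimum of UB over the probability simplex: inf_{F_Y ∈ 𝔽^1(Y)} sup_{F_X ∈ 𝔽(X)} π_X(F_X,F_Y) ≤ min_{p ∈ Δ} UB(p). -/
open MeasureTheory Finset

noncomputable section

/-- Admissible strategies for a player with budget `B`: Borel probability measures on `ℝ^C`
supported (i.e. concentrated, with full measure) on the nonnegative orthant, whose expected
total allocation is at most `B`. -/
def Strat (C : ℕ) (B : ℝ) : Set (Measure (Fin C → ℝ)) :=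
  {μ | IsProbabilityMeasure μ ∧ μ {x | ∀ c, 0 ≤ x c} = 1 ∧
    ∫⁻ x, ENNReal.ofReal (∑ c, x c) ∂μ ≤ ENNReal.ofReal B}

/-- Expected payoff to player `X`: `E[Σ_c v_c · 1{x_c ≥ y_c}]`. -/
def payoff (C : ℕ) (v : Fin C → ℝ) (F G : Measure (Fin C → ℝ)) : ℝ :=
  ∫ x, (∫ y, (∑ c, if y c ≤ x c then v c else 0) ∂G) ∂F

/-- Allocations `t·e_c` with at most one positive coordinate. -/
def R1 (C : ℕ) : Set (Fin C → ℝ) :=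
  {y | ∃ c : Fin C, ∃ t : ℝ, 0 ≤ t ∧ y = fun c' => if c' = c then t else 0}

/-- Restricted strategies: admissible strategies concentrated on `R1`. -/
def Strat1 (C : ℕ) (B : ℝ) : Set (Measure (Fin C → ℝ)) :=
  {μ | μ ∈ Strat C B ∧ μ (R1 C) = 1}

/-- The upper-bound objective `UB(p)`. -/
def UB (C : ℕ) (v : Fin C → ℝ) (X Y : ℝ) (p : Fin C → ℝ) : ℝ :=
  if Y / X * (∑ c, v c * p c) ≤ ⨆ c, v c * p c then
    1 - Y / (2 * X) * (∑ c, v c * p c) ^ 2 / (⨆ c, v c * p c)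
  else
    1 - (∑ c, v c * p c) + X / (2 * Y) * (⨆ c, v c * p c)

/-!
Fix `p` in the simplex. Player Y picks a single contest `c` with probability `p c` and,
independently, a bid that is `0` with probability `1 - q` and uniform on `[0, h]` with probability
`q`, where `h = 2Y/q` exhausts the budget. An allocation `x` loses contest `c` exactly when `c` is
picked and the bid exceeds `x c`, which has probability at least `p c * (q - (q / h) * x c)`. Hence
the payoff is at most `1 - q * vᵀp + (q² / 2Y) * (max_c v_c p_c) * ∑ x`, which is affine in the
total allocation, so only the budget `X` matters. Minimising over `q ∈ (0, 1]` yields `UB p`: the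
vertex of the parabola is `q = (Y / X) * vᵀp / max_c v_c p_c`, and the two cases of `UB` tell
whether it is at most `1`.
-/

section WonValue

variable {ι : Type*} [Fintype ι]

/-- The value won by the allocation `x` against the allocation `y`, ties being won by `x`: the
integrand of `payoff`. -/
def wonValue (v x y : ι → ℝ) : ℝ := ∑ c, if y c ≤ x c then v c else 0

lemma wonValue_nonneg {v : ι → ℝ} (hv : ∀ c, 0 ≤ v c) (x y : ι → ℝ) : 0 ≤ wonValue v x y :=
  sum_nonneg fun c _ => ite_nonneg (hv c) le_rfl

lemma measurable_wonValue (v x : ι → ℝ) : Measurable (wonValue v x) :=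
  Finset.measurable_sum _ fun c _ =>
    Measurable.ite (measurableSet_le (measurable_pi_apply c) measurable_const)
      measurable_const measurable_const

lemma integrable_wonValue (v x : ι → ℝ) (μ : Measure (ι → ℝ)) [IsFiniteMeasure μ] :
    Integrable (wonValue v x) μ := by
  refine .of_bound (measurable_wonValue v x).aestronglyMeasurable (∑ c, ‖v c‖)
    (.of_forall fun y => ?_)
  refine norm_sum_le_of_le _ fun c _ => ?_
  split_ifs <;> simp

variable [DecidableEq ι]

lemma wonValue_single (v : ι → ℝ) {x : ι → ℝ} (hx : ∀ c, 0 ≤ x c) (c : ι) (t : ℝ) :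
    wonValue v x (Pi.single c t) = ∑ i, v i - (Set.Ioi (x c)).indicator (fun _ => v c) t := by
  have loses_only_c (i : ι) : (if (Pi.single c t : ι → ℝ) i ≤ x i then v i else 0) =
      v i - if i = c then (Set.Ioi (x c)).indicator (fun _ => v c) t else 0 := by
    rcases eq_or_ne i c with rfl | hic
    · by_cases hit : t ≤ x i <;> simp [hit, lt_iff_not_ge]
    · simp [hic, hx i]
  simp only [wonValue, loses_only_c, sum_sub_distrib, sum_ite_eq', mem_univ, if_true]

lemma integral_wonValue_single (v : ι → ℝ) {x : ι → ℝ} (hx : ∀ c, 0 ≤ x c) (c : ι)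
    (ν : Measure ℝ) [IsProbabilityMeasure ν] :
    ∫ t, wonValue v x (Pi.single c t) ∂ν = ∑ i, v i - ν.real (Set.Ioi (x c)) * v c := by
  simp only [wonValue_single v hx]
  rw [integral_sub (integrable_const _) ((integrable_const _).indicator measurableSet_Ioi),
    integral_const, integral_indicator_const _ measurableSet_Ioi]
  simp

end WonValue

section SingleContestMixture

lemma measurable_pi_single {ι : Type*} {M : ι → Type*} [DecidableEq ι] [∀ i, Zero (M i)]
    [∀ i, MeasurableSpace (M i)] (c : ι) : Measurable (Pi.single c : M c → ∀ i, M i) :=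
  measurable_update 0

variable {ι : Type*} [Fintype ι]

lemma sum_ofReal_eq_one_of_mem_stdSimplex {p : ι → ℝ} (hp : p ∈ stdSimplex ℝ ι) :
    ∑ c, ENNReal.ofReal (p c) = 1 := by
  rw [← ENNReal.ofReal_sum_of_nonneg fun c _ => hp.1 c, hp.2, ENNReal.ofReal_one]

variable [DecidableEq ι]

/-- The law of the allocation that bids on a single contest, chosen with probabilities `p`, an
independent amount of law `ν`. -/
def singleContestMixture (p : ι → ℝ) (ν : Measure ℝ) : Measure (ι → ℝ) :=
  ∑ c, ENNReal.ofReal (p c) • ν.map (Pi.single c)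

lemma lintegral_singleContestMixture (p : ι → ℝ) (ν : Measure ℝ) {f : (ι → ℝ) → ENNReal}
    (hf : Measurable f) :
    ∫⁻ y, f y ∂singleContestMixture p ν =
      ∑ c, ENNReal.ofReal (p c) * ∫⁻ t, f (Pi.single c t) ∂ν := by
  simp only [singleContestMixture, lintegral_finsetSum_measure, lintegral_smul_measure,
    smul_eq_mul, lintegral_map hf (measurable_pi_single _)]

lemma integral_wonValue_singleContestMixture (v : ι → ℝ) {p x : ι → ℝ} (hp : p ∈ stdSimplex ℝ ι)
    (hx : ∀ c, 0 ≤ x c) (ν : Measure ℝ) [IsProbabilityMeasure ν] :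
    ∫ y, wonValue v x y ∂singleContestMixture p ν =
      ∑ c, v c - ∑ c, v c * p c * ν.real (Set.Ioi (x c)) := by
  have integral_component (c : ι) :
      ∫ y, wonValue v x y ∂(ENNReal.ofReal (p c) • ν.map (Pi.single c)) =
        p c * ∑ i, v i - v c * p c * ν.real (Set.Ioi (x c)) := by
    rw [integral_smul_measure, ENNReal.toReal_ofReal (hp.1 c), smul_eq_mul,
      integral_map (measurable_pi_single c).aemeasurable
        (measurable_wonValue v x).aestronglyMeasurable, integral_wonValue_single v hx]
    ring
  rw [singleContestMixture, integral_finsetSum_measure fun c _ =>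
    (integrable_wonValue v x _).smul_measure ENNReal.ofReal_ne_top]
  simp only [integral_component, sum_sub_distrib, ← sum_mul, hp.2, one_mul]

variable {p : ι → ℝ} {ν : Measure ℝ} [IsProbabilityMeasure ν]

lemma isProbabilityMeasure_singleContestMixture (hp : p ∈ stdSimplex ℝ ι) :
    IsProbabilityMeasure (singleContestMixture p ν) := by
  constructor
  rw [← lintegral_one, lintegral_singleContestMixture p ν measurable_const]
  simpa using sum_ofReal_eq_one_of_mem_stdSimplex hp

lemma singleContestMixture_apply_eq_one (hp : p ∈ stdSimplex ℝ ι) {s : Set (ι → ℝ)}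
    (hs : ∀ c, ∀ᵐ t ∂ν, Pi.single c t ∈ s) : singleContestMixture p ν s = 1 := by
  have := isProbabilityMeasure_singleContestMixture (ν := ν) hp
  refine le_antisymm prob_le_one ?_
  have one_le_component (c : ι) : 1 ≤ ν.map (Pi.single c) s :=
    calc 1 = ν {t | Pi.single c t ∈ s} := by
          rw [measure_congr (Filter.eventuallyEq_univ.2 (hs c)), measure_univ]
      _ ≤ ν.map (Pi.single c) s := Measure.le_map_apply (measurable_pi_single c).aemeasurable s
  calc 1 = ∑ c, ENNReal.ofReal (p c) * 1 := by
        simp only [mul_one, sum_ofReal_eq_one_of_mem_stdSimplex hp]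
    _ ≤ ∑ c, ENNReal.ofReal (p c) * ν.map (Pi.single c) s := by
        gcongr with c
        exact one_le_component c
    _ = singleContestMixture p ν s := by simp [singleContestMixture]

end SingleContestMixture

lemma singleContestMixture_mem_Strat1 {C : ℕ} {p : Fin C → ℝ} (hp : p ∈ stdSimplex ℝ (Fin C))
    {ν : Measure ℝ} [IsProbabilityMeasure ν] (hν : ∀ᵐ t ∂ν, 0 ≤ t) {B : ℝ}
    (hmean : ∫⁻ t, ENNReal.ofReal t ∂ν ≤ ENNReal.ofReal B) :
    singleContestMixture p ν ∈ Strat1 C B := by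
  refine ⟨⟨isProbabilityMeasure_singleContestMixture hp,
    singleContestMixture_apply_eq_one hp fun c => ?_, ?_⟩,
    singleContestMixture_apply_eq_one hp fun c => ?_⟩
  · filter_upwards [hν] with t ht
    exact (Pi.single_nonneg (α := fun _ : Fin C => ℝ)).2 ht
  · rw [lintegral_singleContestMixture p ν (by fun_prop)]
    simpa only [sum_pi_single', mem_univ, if_true, ← sum_mul,
      sum_ofReal_eq_one_of_mem_stdSimplex hp, one_mul] using hmean
  · filter_upwards [hν] with t ht
    exact ⟨c, t, ht, funext fun i => Pi.single_apply c t i⟩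

section ZeroInflatedUniform

/-- The law of a bid that is `0` with probability `1 - q` and uniform on `[0, h]` with
probability `q`. -/
def zeroInflatedUniform (q h : ℝ) : Measure ℝ :=
  ENNReal.ofReal (1 - q) • Measure.dirac 0 +
    ENNReal.ofReal (q / h) • volume.restrict (Set.Icc 0 h)

variable {q h : ℝ}

lemma isProbabilityMeasure_zeroInflatedUniform (hq0 : 0 ≤ q) (hq1 : q ≤ 1) (hh : 0 < h) :
    IsProbabilityMeasure (zeroInflatedUniform q h) := by
  constructor
  simp only [zeroInflatedUniform, Measure.add_apply, Measure.smul_apply, measure_univ,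
    Measure.restrict_apply_univ, Real.volume_Icc, smul_eq_mul, mul_one, sub_zero]
  rw [← ENNReal.ofReal_mul (by positivity), div_mul_cancel₀ q hh.ne',
    ← ENNReal.ofReal_add (sub_nonneg.2 hq1) hq0, sub_add_cancel, ENNReal.ofReal_one]

lemma ae_nonneg_zeroInflatedUniform (q h : ℝ) : ∀ᵐ t ∂zeroInflatedUniform q h, 0 ≤ t := by
  refine ae_add_measure_iff.2 ⟨Measure.ae_smul_measure ?_ _, Measure.ae_smul_measure ?_ _⟩
  · simp [ae_dirac_eq]
  · filter_upwards [ae_restrict_mem measurableSet_Icc] with t ht using ht.1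

lemma lintegral_ofReal_Icc_zero (hh : 0 ≤ h) :
    ∫⁻ t in Set.Icc 0 h, ENNReal.ofReal t = ENNReal.ofReal (h ^ 2 / 2) := by
  have nonneg : 0 ≤ᵐ[volume.restrict (Set.Icc 0 h)] fun t : ℝ => t := by
    filter_upwards [ae_restrict_mem measurableSet_Icc] with t ht using ht.1
  rw [← ofReal_integral_eq_lintegral_ofReal continuous_id'.integrableOn_Icc nonneg,
    integral_Icc_eq_integral_Ioc, ← intervalIntegral.integral_of_le hh, integral_id]
  simp

lemma lintegral_ofReal_zeroInflatedUniform (hq : 0 ≤ q) (hh : 0 < h) :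
    ∫⁻ t, ENNReal.ofReal t ∂zeroInflatedUniform q h = ENNReal.ofReal (q * h / 2) := by
  rw [zeroInflatedUniform, lintegral_add_measure, lintegral_smul_measure, lintegral_smul_measure,
    lintegral_dirac, lintegral_ofReal_Icc_zero hh.le, ENNReal.ofReal_zero, smul_zero, zero_add,
    smul_eq_mul, ← ENNReal.ofReal_mul (by positivity)]
  congr 1
  field_simp

lemma le_measureReal_Ioi_zeroInflatedUniform (hq0 : 0 ≤ q) (hh : 0 < h)
    {t : ℝ} (ht : 0 ≤ t) : q - q / h * t ≤ (zeroInflatedUniform q h).real (Set.Ioi t) := by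
  have Ioi_inter_Icc : Set.Ioi t ∩ Set.Icc 0 h = Set.Ioc t h := by
    ext u
    exact ⟨fun hu => ⟨hu.1, hu.2.2⟩, fun hu => ⟨hu.1, ht.trans hu.1.le, hu.2⟩⟩
  have tail : zeroInflatedUniform q h (Set.Ioi t) = ENNReal.ofReal (q / h * (h - t)) := by
    rw [ENNReal.ofReal_mul (by positivity)]
    simp [zeroInflatedUniform, Measure.restrict_apply measurableSet_Ioi, Ioi_inter_Icc, ht]
  calc q - q / h * t = q / h * (h - t) := by field_simp
    _ ≤ (zeroInflatedUniform q h).real (Set.Ioi t) := by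
        rw [measureReal_def, tail]
        exact le_max_left _ _

end ZeroInflatedUniform

lemma sum_mul_le_iSup_mul_sum {ι : Type*} [Fintype ι] (w : ι → ℝ) {x : ι → ℝ}
    (hx : ∀ c, 0 ≤ x c) : ∑ c, w c * x c ≤ (⨆ c, w c) * ∑ c, x c := by
  rw [mul_sum]
  gcongr with c
  · exact hx c
  · exact le_ciSup (Set.finite_range w).bddAbove c

lemma integral_wonValue_zeroInflatedUniform_le {ι : Type*} [Fintype ι] [DecidableEq ι]
    {v p x : ι → ℝ} (hv : ∀ c, 0 ≤ v c) (hp : p ∈ stdSimplex ℝ ι) (hx : ∀ c, 0 ≤ x c)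
    {q h : ℝ} (hq0 : 0 ≤ q) (hq1 : q ≤ 1) (hh : 0 < h) :
    ∫ y, wonValue v x y ∂singleContestMixture p (zeroInflatedUniform q h) ≤
      ∑ c, v c - q * ∑ c, v c * p c + q / h * (⨆ c, v c * p c) * ∑ c, x c := by
  have := isProbabilityMeasure_zeroInflatedUniform hq0 hq1 hh
  calc ∫ y, wonValue v x y ∂singleContestMixture p (zeroInflatedUniform q h)
      = ∑ c, v c - ∑ c, v c * p c * (zeroInflatedUniform q h).real (Set.Ioi (x c)) :=
        integral_wonValue_singleContestMixture v hp hx _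
    _ ≤ ∑ c, v c - ∑ c, v c * p c * (q - q / h * x c) := by
        gcongr with c
        · exact mul_nonneg (hv c) (hp.1 c)
        · exact le_measureReal_Ioi_zeroInflatedUniform hq0 hh (hx c)
    _ = ∑ c, v c - q * ∑ c, v c * p c + q / h * ∑ c, v c * p c * x c := by
        rw [sub_add, mul_sum, mul_sum, ← sum_sub_distrib (fun c => q * (v c * p c))]
        congr! 2 with c
        ring
    _ ≤ ∑ c, v c - q * ∑ c, v c * p c + q / h * ((⨆ c, v c * p c) * ∑ c, x c) := by
        gcongr
        exact sum_mul_le_iSup_mul_sum (fun c => v c * p c) hx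
    _ = _ := by ring

lemma exists_mul_pos_of_mem_stdSimplex {ι : Type*} [Fintype ι] {v p : ι → ℝ}
    (hv : ∀ c, 0 < v c) (hp : p ∈ stdSimplex ℝ ι) : ∃ c, 0 < v c * p c := by
  have sum_pos : ∑ _c : ι, (0 : ℝ) < ∑ c, p c := by simp [hp.2]
  obtain ⟨c, -, hc⟩ := exists_lt_of_sum_lt sum_pos
  exact ⟨c, mul_pos (hv c) hc⟩

section Payoff

variable {C : ℕ} {v : Fin C → ℝ} {X Y : ℝ} {F : Measure (Fin C → ℝ)}

lemma ae_nonneg_of_mem_Strat (hF : F ∈ Strat C X) : ∀ᵐ x ∂F, ∀ c, 0 ≤ x c := by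
  have := hF.1
  have measurableSet_orthant : MeasurableSet {x : Fin C → ℝ | ∀ c, 0 ≤ x c} := by measurability
  exact (mem_ae_iff_prob_eq_one measurableSet_orthant).2 hF.2.1

lemma ae_sum_nonneg_of_mem_Strat (hF : F ∈ Strat C X) : 0 ≤ᵐ[F] fun x => ∑ c, x c := by
  filter_upwards [ae_nonneg_of_mem_Strat hF] with x hx using sum_nonneg fun c _ => hx c

lemma integrable_sum_of_mem_Strat (hF : F ∈ Strat C X) : Integrable (fun x => ∑ c, x c) F :=
  ⟨by fun_prop, (hasFiniteIntegral_iff_ofReal (ae_sum_nonneg_of_mem_Strat hF)).2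
    (hF.2.2.trans_lt ENNReal.ofReal_lt_top)⟩

lemma integral_sum_le_of_mem_Strat (hX : 0 ≤ X) (hF : F ∈ Strat C X) :
    ∫ x, ∑ c, x c ∂F ≤ X := by
  rw [integral_eq_lintegral_of_nonneg_ae (ae_sum_nonneg_of_mem_Strat hF) (by fun_prop)]
  exact ENNReal.toReal_le_of_le_ofReal hX hF.2.2

lemma dirac_zero_mem_Strat (C : ℕ) (X : ℝ) : Measure.dirac 0 ∈ Strat C X :=
  ⟨inferInstance, Measure.dirac_apply_of_mem fun _ => le_rfl, by
    rw [lintegral_dirac' _ (by fun_prop)]; simp⟩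

lemma payoff_nonneg (hv : ∀ c, 0 ≤ v c) (F G : Measure (Fin C → ℝ)) : 0 ≤ payoff C v F G :=
  integral_nonneg fun x => integral_nonneg fun y => wonValue_nonneg hv x y

lemma payoff_le_of_integral_wonValue_le (hv : ∀ c, 0 ≤ v c) (hX : 0 ≤ X) (hF : F ∈ Strat C X)
    {G : Measure (Fin C → ℝ)} {a b : ℝ} (hb : 0 ≤ b)
    (hG : ∀ x : Fin C → ℝ, (∀ c, 0 ≤ x c) → ∫ y, wonValue v x y ∂G ≤ a + b * ∑ c, x c) :
    payoff C v F G ≤ a + b * X := by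
  have := hF.1
  have integrable_mul_sum := (integrable_sum_of_mem_Strat hF).const_mul b
  calc payoff C v F G = ∫ x, ∫ y, wonValue v x y ∂G ∂F := rfl
    _ ≤ ∫ x, (a + b * ∑ c, x c) ∂F := by
        refine integral_mono_of_nonneg (.of_forall fun x => ?_)
          ((integrable_const a).add integrable_mul_sum) ?_
        · exact integral_nonneg fun y => wonValue_nonneg hv x y
        · filter_upwards [ae_nonneg_of_mem_Strat hF] with x hx using hG x hx
    _ = a + b * ∫ x, ∑ c, x c ∂F := by
        rw [integral_add (integrable_const a) integrable_mul_sum, integral_const_mul]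
        simp
    _ ≤ a + b * X := by
        gcongr
        exact integral_sum_le_of_mem_Strat hX hF

lemma iInf_iSup_payoff_le (hv : ∀ c, 0 ≤ v c) {G : Measure (Fin C → ℝ)} (hG : G ∈ Strat1 C Y)
    {b : ℝ} (hb : ∀ F ∈ Strat C X, payoff C v F G ≤ b) :
    (⨅ G : Strat1 C Y, ⨆ F : Strat C X, payoff C v F.1 G.1) ≤ b := by
  have bddBelow :
      BddBelow (Set.range fun G : Strat1 C Y => ⨆ F : Strat C X, payoff C v F.1 G.1) :=
    ⟨0, Set.forall_mem_range.2 fun G => Real.iSup_nonneg fun F => payoff_nonneg hv F.1 G.1⟩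
  have : Nonempty (Strat C X) := ⟨⟨_, dirac_zero_mem_Strat C X⟩⟩
  exact (ciInf_le bddBelow ⟨G, hG⟩).trans (ciSup_le fun F => hb F.1 F.2)

variable {p : Fin C → ℝ}

lemma iInf_iSup_payoff_le_quadratic (hv : ∀ c, 0 ≤ v c) (hp : p ∈ stdSimplex ℝ (Fin C))
    (hX : 0 ≤ X) (hY : 0 < Y) {q : ℝ} (hq : q ∈ Set.Ioc 0 1) :
    (⨅ G : Strat1 C Y, ⨆ F : Strat C X, payoff C v F.1 G.1) ≤
      ∑ c, v c - q * ∑ c, v c * p c + q ^ 2 / (2 * Y) * (⨆ c, v c * p c) * X := by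
  obtain ⟨hq0, hq1⟩ := hq
  have hh : 0 < 2 * Y / q := by positivity
  have density_eq : q / (2 * Y / q) = q ^ 2 / (2 * Y) := by field_simp
  have mean_eq : q * (2 * Y / q) / 2 = Y := by field_simp
  have := isProbabilityMeasure_zeroInflatedUniform hq0.le hq1 hh
  have iSup_nonneg : 0 ≤ ⨆ c, v c * p c := Real.iSup_nonneg fun c => mul_nonneg (hv c) (hp.1 c)
  have mem_Strat1 : singleContestMixture p (zeroInflatedUniform q (2 * Y / q)) ∈ Strat1 C Y := by
    refine singleContestMixture_mem_Strat1 hp (ae_nonneg_zeroInflatedUniform _ _) ?_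
    rw [lintegral_ofReal_zeroInflatedUniform hq0.le hh, mean_eq]
  refine iInf_iSup_payoff_le hv mem_Strat1 fun F hF => ?_
  refine payoff_le_of_integral_wonValue_le hv hX hF (by positivity) fun x hx => ?_
  rw [← density_eq]
  exact integral_wonValue_zeroInflatedUniform_le hv hp hx hq0.le hq1 hh

lemma exists_UB_eq_quadratic (hv : ∀ c, 0 < v c) (hp : p ∈ stdSimplex ℝ (Fin C))
    (hX : 0 < X) (hY : 0 < Y) :
    ∃ q ∈ Set.Ioc (0 : ℝ) 1, UB C v X Y p =
      1 - q * ∑ c, v c * p c + q ^ 2 / (2 * Y) * (⨆ c, v c * p c) * X := by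
  obtain ⟨c, hc⟩ := exists_mul_pos_of_mem_stdSimplex hv hp
  have iSup_pos : 0 < ⨆ c, v c * p c :=
    hc.trans_le (le_ciSup (f := fun c => v c * p c) (Set.finite_range _).bddAbove c)
  have sum_pos : 0 < ∑ c, v c * p c :=
    hc.trans_le (single_le_sum (f := fun c => v c * p c)
      (fun c _ => mul_nonneg (hv c).le (hp.1 c)) (mem_univ c))
  unfold UB
  generalize (⨆ c, v c * p c) = m at *
  generalize ∑ c, v c * p c = s at *
  split_ifs with hvertex
  · refine ⟨Y / X * s / m, ⟨by positivity, (div_le_one iSup_pos).2 hvertex⟩, ?_⟩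
    field_simp
    ring
  · refine ⟨1, ⟨one_pos, le_rfl⟩, ?_⟩
    field_simp

end Payoff

/-- Lemma 2: in the restricted game `RL^1(X,Y;v)`, the min-max value of
player X is at most `min_{p ∈ Δ} UB(p)`. -/
theorem RL1_minmax_upper_bound_simplex (C : ℕ) (hC : 0 < C) (v : Fin C → ℝ)
    (hpos : ∀ c, 0 < v c) (hsum : ∑ c, v c = 1)
    (X Y : ℝ) (hX : 0 < X) (hY : 0 < Y) :
    (⨅ G : Strat1 C Y, ⨆ F : Strat C X, payoff C v F.1 G.1) ≤
      sInf (UB C v X Y '' stdSimplex ℝ (Fin C)) := by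
  refine le_csInf (Set.Nonempty.image _ ⟨_, single_mem_stdSimplex ℝ ⟨0, hC⟩⟩) ?_
  rintro _ ⟨p, hp, rfl⟩
  obtain ⟨q, hq, UB_eq⟩ := exists_UB_eq_quadratic hpos hp hX hY
  rw [UB_eq, ← hsum]
  exact iInf_iSup_payoff_le_quadratic (fun c => (hpos c).le) hp hX.le hY hq
end
end

section
/- For any k ∈ {1,…,C} and any subset S ⊆ {1,…,C} with |S| = k, the top-k contest set is weakly preferred: UB(q([k])) ≤ UB(q(S)). -/
open Finset

noncomputable section

/-- The equalizing point `q(S)` of a subset `S` of contests. -/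
def qvec (C : ℕ) (v : Fin C → ℝ) (S : Finset (Fin C)) : Fin C → ℝ :=
  fun c => if c ∈ S then
    (∏ j ∈ S.erase c, v j) / (∑ l ∈ S, ∏ j ∈ S.erase l, v j)
  else 0

/-- The top `k` contests in value, `[k] = {1,…,k}`. -/
def topk (C k : ℕ) : Finset (Fin C) := Finset.univ.filter (fun c => (c : ℕ) < k)

/-!
All products `v_c q_c(S)` with `c ∈ S` equal `m(S) = (∑_{l ∈ S} 1 / v_l)⁻¹`, so `vᵀq(S) = |S| m(S)`
and `max_c v_c q_c(S) = m(S)`. Hence `UB(q(S)) = 1 - a m(S)`, where `a ≥ 0` depends only on `X`, `Y`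
and `|S|`. Among the sets of a given size, `m(S)` is largest for the highest values.
-/

section SumExchange

variable {ι M : Type*} [DecidableEq ι] [AddCommMonoid M] [PartialOrder M]
  [IsOrderedCancelAddMonoid M]

lemma sum_le_sum_of_card_eq_of_forall_sdiff {s t : Finset ι} {f : ι → M} (hcard : #s = #t)
    (hf : ∀ i ∈ s \ t, ∀ j ∈ t \ s, f i ≤ f j) : ∑ i ∈ s, f i ≤ ∑ i ∈ t, f i := by
  let e : ↥(s \ t) ≃ ↥(t \ s) := equivOfCardEq (card_sdiff_comm hcard)
  refine sum_sdiff_le_sum_sdiff.mp ?_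
  calc ∑ i ∈ s \ t, f i = ∑ i : ↥(s \ t), f i := (sum_coe_sort _ _).symm
    _ ≤ ∑ i : ↥(s \ t), f (e i) := sum_le_sum fun i _ => hf i i.2 (e i) (e i).2
    _ = ∑ j : ↥(t \ s), f j := e.sum_comp fun j => f j
    _ = ∑ j ∈ t \ s, f j := sum_coe_sort _ _

end SumExchange

section EqualizedValue

variable {ι : Type*} {v : ι → ℝ} {S T : Finset ι}

/-- The common value of the products `v c * q_c(S)` over `c ∈ S`, i.e. the harmonic mean of `v`
over `S` divided by `|S|`. -/
def equalizedValue (v : ι → ℝ) (S : Finset ι) : ℝ := (∑ l ∈ S, (v l)⁻¹)⁻¹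

lemma equalizedValue_pos (hS : S.Nonempty) (hv : ∀ c ∈ S, 0 < v c) : 0 < equalizedValue v S :=
  inv_pos.mpr (sum_pos (fun c hc => inv_pos.mpr (hv c hc)) hS)

lemma equalizedValue_le_of_forall_le (hT : T.Nonempty) (hv : ∀ c, 0 < v c) (hcard : #T = #S)
    (hTv : ∀ i ∈ T, ∀ j ∉ T, v j ≤ v i) : equalizedValue v S ≤ equalizedValue v T := by
  classical
  have hsum : ∑ l ∈ T, (v l)⁻¹ ≤ ∑ l ∈ S, (v l)⁻¹ :=
    sum_le_sum_of_card_eq_of_forall_sdiff hcard fun i hi j hj =>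
      inv_anti₀ (hv j) (hTv i (mem_sdiff.mp hi).1 j (mem_sdiff.mp hj).2)
  exact inv_anti₀ (sum_pos (fun l _ => inv_pos.mpr (hv l)) hT) hsum

end EqualizedValue

section EqualizingPoint

variable {C : ℕ} {v : Fin C → ℝ} {S : Finset (Fin C)}

lemma mul_qvec_of_mem (hv : ∀ l ∈ S, v l ≠ 0) {c : Fin C} (hc : c ∈ S) :
    v c * qvec C v S c = equalizedValue v S := by
  have herase : ∀ l ∈ S, ∏ j ∈ S.erase l, v j = (∏ j ∈ S, v j) * (v l)⁻¹ := fun l hl =>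
    (eq_mul_inv_iff_mul_eq₀ (hv l hl)).mpr (prod_erase_mul S v hl)
  calc v c * qvec C v S c
      = v c * ((∏ j ∈ S, v j) * (v c)⁻¹ / ((∏ j ∈ S, v j) * ∑ l ∈ S, (v l)⁻¹)) := by
        rw [qvec, if_pos hc, herase c hc, sum_congr rfl herase, mul_sum]
    _ = equalizedValue v S := by
        rw [mul_div_mul_left _ _ (prod_ne_zero_iff.mpr hv), ← mul_div_assoc,
          mul_inv_cancel₀ (hv c hc), one_div, equalizedValue]

lemma mul_qvec_of_notMem {c : Fin C} (hc : c ∉ S) : v c * qvec C v S c = 0 := by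
  rw [qvec, if_neg hc, mul_zero]

lemma sum_mul_qvec (hv : ∀ l ∈ S, v l ≠ 0) :
    ∑ c, v c * qvec C v S c = #S * equalizedValue v S := by
  calc ∑ c, v c * qvec C v S c
      = ∑ c ∈ S, v c * qvec C v S c :=
        (sum_subset (subset_univ S) fun c _ hc => mul_qvec_of_notMem hc).symm
    _ = #S * equalizedValue v S := by
        rw [sum_congr rfl fun c hc => mul_qvec_of_mem hv hc, sum_const, nsmul_eq_mul]

lemma iSup_mul_qvec (hS : S.Nonempty) (hv : ∀ l ∈ S, 0 < v l) :
    ⨆ c, v c * qvec C v S c = equalizedValue v S := by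
  have hmem : ∀ c ∈ S, v c * qvec C v S c = equalizedValue v S := fun c hc =>
    mul_qvec_of_mem (fun l hl => (hv l hl).ne') hc
  obtain ⟨d, hd⟩ := hS
  have : Nonempty (Fin C) := ⟨d⟩
  refine le_antisymm (ciSup_le fun c => ?_) ?_
  · by_cases hc : c ∈ S
    · exact (hmem c hc).le
    · exact (mul_qvec_of_notMem hc).trans_le (equalizedValue_pos ⟨d, hd⟩ hv).le
  · exact (hmem d hd).ge.trans
      (le_ciSup (f := fun c => v c * qvec C v S c) (Set.finite_range _).bddAbove d)

end EqualizingPoint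

section UpperBound

variable {C : ℕ} {v : Fin C → ℝ} {X Y : ℝ} {S T : Finset (Fin C)}

/-- The rate at which `UB(q(S))` decreases in the equalized value of `S`, as a function of
`n = |S|`. The size is taken to be real to avoid casts. -/
def ubSlope (X Y n : ℝ) : ℝ :=
  if Y / X * n ≤ 1 then Y / (2 * X) * n ^ 2 else n - X / (2 * Y)

lemma ubSlope_nonneg (hX : 0 < X) (hY : 0 < Y) (n : ℝ) : 0 ≤ ubSlope X Y n := by
  unfold ubSlope
  split_ifs with h
  · positivity
  · have hXY : X < Y * n := by
      rwa [not_le, div_mul_eq_mul_div, one_lt_div hX] at h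
    rw [sub_nonneg, div_le_iff₀ (by positivity)]
    linarith

lemma UB_qvec (hS : S.Nonempty) (hv : ∀ c ∈ S, 0 < v c) :
    UB C v X Y (qvec C v S) = 1 - ubSlope X Y #S * equalizedValue v S := by
  have hm : 0 < equalizedValue v S := equalizedValue_pos hS hv
  have hbranch : Y / X * (#S * equalizedValue v S) ≤ equalizedValue v S ↔ Y / X * #S ≤ 1 := by
    rw [← mul_assoc, mul_le_iff_le_one_left hm]
  rw [UB, sum_mul_qvec fun c hc => (hv c hc).ne', iSup_mul_qvec hS hv, ubSlope]
  simp only [hbranch]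
  split_ifs
  · field_simp
  · ring

theorem UB_topk_le_general (hX : 0 < X) (hY : 0 < Y) (hv : ∀ c, 0 < v c) (hT : T.Nonempty)
    (hcard : #T = #S) (hTv : ∀ i ∈ T, ∀ j ∉ T, v j ≤ v i) :
    UB C v X Y (qvec C v T) ≤ UB C v X Y (qvec C v S) := by
  have hS : S.Nonempty := card_pos.mp (hcard ▸ hT.card_pos)
  rw [UB_qvec hT fun c _ => hv c, UB_qvec hS fun c _ => hv c, hcard]
  exact sub_le_sub_left (mul_le_mul_of_nonneg_left
    (equalizedValue_le_of_forall_le hT hv hcard hTv) (ubSlope_nonneg hX hY _)) 1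

end UpperBound

section TopContests

variable {C k : ℕ}

lemma mem_topk {c : Fin C} : c ∈ topk C k ↔ (c : ℕ) < k := by
  simp [topk]

lemma card_topk (hk : k ≤ C) : #(topk C k) = k := by
  rw [topk, Fin.card_filter_val_lt, min_eq_right hk]

lemma apply_le_apply_of_mem_topk {α : Type*} [Preorder α] {v : Fin C → α} (hv : Antitone v)
    {i j : Fin C} (hi : i ∈ topk C k) (hj : j ∉ topk C k) : v j ≤ v i :=
  hv (Fin.le_def.mpr ((mem_topk.mp hi).le.trans (not_lt.mp (mt mem_topk.mpr hj))))

end TopContests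

/-- Lemma 8: among all subsets of size `k`, the top-`k` contest set is
weakly preferred: `UB(q([k])) ≤ UB(q(S))`. -/
theorem UB_topk_le (C : ℕ) (v : Fin C → ℝ)
    (hpos : ∀ c, 0 < v c) (hdec : StrictAnti v) (hsum : ∑ c, v c = 1)
    (X Y : ℝ) (hX : 0 < X) (hY : 0 < Y)
    (k : ℕ) (hk1 : 1 ≤ k) (hk2 : k ≤ C) (S : Finset (Fin C)) (hcard : S.card = k) :
    UB C v X Y (qvec C v (topk C k)) ≤ UB C v X Y (qvec C v S) := by
  have hT : #(topk C k) = k := card_topk hk2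
  exact UB_topk_le_general hX hY hpos (card_pos.mp (hk1.trans_eq hT.symm)) (hT.trans hcard.symm)
    fun _ hi _ hj => apply_le_apply_of_mem_topk hdec.antitone hi hj
end
end
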